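/- For every finite A ⊆ F_p with 2 ≤ |A| ≤ p^{1/2}, the multiplicative energy satisfies E^×(A,A)⁴ ≤ C·|A|⁵·|A−A|⁵·|A+A−A−A| for an absolute constant C. -/

import Mathlib

open Finset Pointwise

/-- Multiplicative energy of `Y` and `Z`. -/
def paperMulEnergy {p : ℕ} (Y Z : Finset (ZMod p)) : ℕ :=
  ∑ x ∈ Y, ∑ y ∈ Y, ((Z.image (x * ·)) ∩ (Z.image (y * ·))).card

/-!
Fix `y`, put `Z = y • A`, and let `B` be the set of `x ∈ A` with `m ≤ #(x • A ∩ Z)`. For `x ∈ B`,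
all but a small proportion of `x • B` is covered by `O(#(B - A) / m)` translates of `Z`. Hence, for
every `r = (a - b) / (c - d)` with `a, b, c, d ∈ B`, at least half of `B` forms a set `U` such that
a dilate of `U + r • U` is covered by `O((#(B - A) / m) ^ 4)` translates of `Z + Z - Z - Z`.

On the other hand, `r` can be chosen with `#B ^ 3 ≪ #(B - B) * #(U + r • U)`. If every element of
`F_p` is such a quotient, take an `r` for which `(u, v) ↦ u + r * v` has as few collisions on
`B × B` as on average. Otherwise, stepping through `F_p` yields a quotient `r` such that `r - 1` is
not a quotient, so `(x, u) ↦ x + (r - 1) * u` is injective on `B × B`, and `X + (r - 1) • U` is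
contained in `X + r • U - U`, which Plünnecke's inequality controls for a suitable `X ⊆ U`.

Together these give `m ^ 4 * #B ^ 3 ≪ K` with `K` independent of `m`, that is, the `j`-th largest
value of `#(x • A ∩ Z)` is `O((K / j ^ 3) ^ (1 / 4))`. As `∑ j ≤ n, j ^ (-3 / 4) = O(n ^ (1 / 4))`,
summing over all values loses no logarithm, unlike selecting one popular dyadic range of values.
-/

section Pluennecke

lemma exists_subset_forall_mul_card_le {α : Type*} (f : Finset α → ℕ) {U : Finset α}
    (hU : U.Nonempty) :
    ∃ X ⊆ U, X.Nonempty ∧ ∀ Y ⊆ U, f X * #Y ≤ f Y * #X := by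
  obtain ⟨X, hX, hmin⟩ := exists_min_image {Y ∈ U.powerset | Y.Nonempty}
    (fun Y => (f Y / #Y : ℚ)) ⟨U, by simpa using hU⟩
  simp only [mem_filter, mem_powerset] at hX hmin
  obtain ⟨hXU, hXne⟩ := hX
  refine ⟨X, hXU, hXne, fun Y hY => ?_⟩
  rcases Y.eq_empty_or_nonempty with rfl | hYne
  · simp
  have hratio := hmin Y ⟨hY, hYne⟩
  rw [div_le_div_iff₀ (by exact_mod_cast hXne.card_pos) (by exact_mod_cast hYne.card_pos)]
    at hratio
  exact_mod_cast hratio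

/- In `G × ℤ`, adding `V × [0, n) ∪ W × [n, n + m)` to `Y × {0}` produces a set of size
`n * #(Y + V) + m * #(Y + W)`, so that the weighted inequality is the usual one for this set. -/
lemma pluennecke_petridis_inequality_add_weighted {G : Type*} [AddGroup G] [DecidableEq G]
    {X V W : Finset G} {m n : ℕ} (C : Finset G)
    (hX : ∀ Y ⊆ X, (n * #(X + V) + m * #(X + W)) * #Y ≤ (n * #(Y + V) + m * #(Y + W)) * #X) :
    (n * #(C + X + V) + m * #(C + X + W)) * #X ≤
      (n * #(X + V) + m * #(X + W)) * #(C + X) := by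
  set D : Finset (G × ℤ) := V ×ˢ Ico (0 : ℤ) n ∪ W ×ˢ Ico (n : ℤ) (n + m) with hD
  have hcard (Y : Finset G) : #(Y ×ˢ ({0} : Finset ℤ) + D) = n * #(Y + V) + m * #(Y + W) := by
    have hdisj : Disjoint ((Y + V) ×ˢ Ico (0 : ℤ) n) ((Y + W) ×ˢ Ico (n : ℤ) (n + m)) :=
      disjoint_product.2 (.inr (Ico_disjoint_Ico_consecutive _ _ _))
    rw [hD, add_union, product_add_product_comm, product_add_product_comm, singleton_zero,
      zero_add, zero_add, card_union_of_disjoint hdisj]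
    simp [card_product, mul_comm]
  have hmin : ∀ Y' ⊆ X ×ˢ ({0} : Finset ℤ),
      #(X ×ˢ ({0} : Finset ℤ) + D) * #Y' ≤ #(Y' + D) * #(X ×ˢ ({0} : Finset ℤ)) := by
    intro Y' hY'
    rw [product_singleton, subset_map_iff] at hY'
    obtain ⟨Y, hYX, rfl⟩ := hY'
    rw [← product_singleton, hcard, hcard]
    simpa using hX Y hYX
  have hpet := pluennecke_petridis_inequality_add (C ×ˢ ({0} : Finset ℤ)) hmin
  rw [product_add_product_comm, singleton_add_singleton, add_zero, hcard, hcard] at hpet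
  simpa using hpet

lemma exists_subset_card_add_add_mul_sq_le {G : Type*} [AddCommGroup G] [DecidableEq G]
    {U : Finset G} (hU : U.Nonempty) (V W : Finset G) :
    ∃ X ⊆ U, X.Nonempty ∧ #(V + X + W) * #U ^ 2 ≤ 4 * #X * (#(U + V) * #(U + W)) := by
  rcases V.eq_empty_or_nonempty with rfl | hV
  · exact ⟨U, Subset.rfl, hU, by simp⟩
  rcases W.eq_empty_or_nonempty with rfl | hW
  · exact ⟨U, Subset.rfl, hU, by simp⟩
  set m := #(U + V) with hm
  set n := #(U + W) with hn
  have hm0 : 0 < m := (hU.add hV).card_pos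
  have hn0 : 0 < n := (hU.add hW).card_pos
  -- The weights make the contributions of `V` and `W` to the minimised quantity equal at `U`.
  obtain ⟨X, hXU, hX, hmin⟩ :=
    exists_subset_forall_mul_card_le (fun Y => n * #(Y + V) + m * #(Y + W)) hU
  refine ⟨X, hXU, hX, ?_⟩
  set K := n * #(X + V) + m * #(X + W)
  have hK : K * #U ≤ 2 * m * n * #X := by
    have hKU := hmin U Subset.rfl
    rw [← hm, ← hn] at hKU
    linarith
  have hVXW : m * #(V + X + W) * #X ≤ K * #(V + X) :=
    (Nat.mul_le_mul_right _ (Nat.le_add_left _ _)).trans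
      (pluennecke_petridis_inequality_add_weighted V fun Y hY => hmin Y (hY.trans hXU))
  have hVX : n * #(V + X) ≤ K := by
    rw [add_comm V X]
    exact Nat.le_add_right _ _
  have hX0 : 0 < #X := hX.card_pos
  refine Nat.le_of_mul_le_mul_left (c := m * n * #X) ?_ (by positivity)
  calc (m * n * #X) * (#(V + X + W) * #U ^ 2)
      = n * (m * #(V + X + W) * #X) * #U ^ 2 := by ring
    _ ≤ n * (K * #(V + X)) * #U ^ 2 := by gcongr
    _ = K * (n * #(V + X)) * #U ^ 2 := by ring
    _ ≤ K * K * #U ^ 2 := by gcongr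
    _ = (K * #U) ^ 2 := by ring
    _ ≤ (2 * m * n * #X) ^ 2 := by gcongr
    _ = (m * n * #X) * (4 * #X * (m * n)) := by ring

end Pluennecke

lemma smul_finset_sub {R M : Type*} [Monoid R] [AddGroup M] [DistribMulAction R M] [DecidableEq M]
    (r : R) (s t : Finset M) : r • (s - t) = r • s - r • t :=
  image_image₂_distrib (smul_sub r)

lemma sub_smul_finset_subset {R M : Type*} [Ring R] [AddCommGroup M] [Module R M] [DecidableEq M]
    (r s : R) (t : Finset M) : (r - s) • t ⊆ r • t - s • t := by
  intro x hx
  obtain ⟨y, hy, rfl⟩ := mem_smul_finset.1 hx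
  rw [sub_smul]
  exact sub_mem_sub (smul_mem_smul_finset hy) (smul_mem_smul_finset hy)

section Covering

variable {ι G : Type*} [AddGroup G] [DecidableEq G]

lemma exists_card_mul_card_le_mul_card_filter_mem_add {S : Finset ι} {Y : Finset G}
    (hS : S.Nonempty) (hY : Y.Nonempty) (f : ι → G) :
    ∃ t ∈ S.image f - Y, #S * #Y ≤ #(S.image f - Y) * #{i ∈ S | f i ∈ {t} + Y} := by
  have hmaps : ∀ q ∈ S ×ˢ Y, f q.1 - q.2 ∈ S.image f - Y := fun q hq =>
    sub_mem_sub (mem_image_of_mem f (mem_product.1 hq).1) (mem_product.1 hq).2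
  obtain ⟨t, ht, hpigeon⟩ : ∃ t ∈ S.image f - Y,
      #(S ×ˢ Y) ≤ #(S.image f - Y) * #{q ∈ S ×ˢ Y | f q.1 - q.2 = t} := by
    refine exists_le_of_sum_le ((hS.image f).sub hY) ?_
    rw [sum_const, smul_eq_mul, ← mul_sum, ← card_eq_sum_card_fiberwise hmaps]
  refine ⟨t, ht, (card_product S Y).symm.le.trans (hpigeon.trans ?_)⟩
  gcongr
  refine card_le_card_of_injOn Prod.fst ?_ ?_
  · rintro ⟨i, y⟩ hq
    simp only [coe_filter, mem_product, Set.mem_ofPred_eq] at hq ⊢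
    exact ⟨hq.1.1, mem_add.2 ⟨t, mem_singleton_self t, y, hq.1.2, by rw [← hq.2, sub_add_cancel]⟩⟩
  · rintro ⟨i, y⟩ hq ⟨j, z⟩ hq' (rfl : i = j)
    simp only [coe_filter, mem_product, Set.mem_ofPred_eq] at hq hq'
    exact Prod.ext rfl (sub_right_injective (hq.2.trans hq'.2.symm))

lemma exists_card_mul_card_le_and_mul_card_filter_notMem_add_le (S : Finset ι) (f : ι → G)
    {Y : Finset G} (hY : Y.Nonempty) (N : ℕ) :
    ∃ T : Finset G, #T * #Y ≤ N * #(S.image f - Y) ∧ N * #{i ∈ S | f i ∉ T + Y} ≤ #S := by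
  rcases S.eq_empty_or_nonempty with rfl | hS
  · exact ⟨∅, by simp⟩
  set D := S.image f - Y
  -- Among the sets of translates that are efficient on average, a largest one covers enough.
  obtain ⟨T, hT, hmax⟩ := exists_max_image
    {T ∈ D.powerset | #T * #Y * #S ≤ N * #D * #{i ∈ S | f i ∈ T + Y}} card ⟨∅, by simp⟩
  simp only [mem_filter, mem_powerset] at hT hmax
  obtain ⟨hTD, hTeff⟩ := hT
  refine ⟨T, Nat.le_of_mul_le_mul_right (hTeff.trans ?_) hS.card_pos, ?_⟩
  · gcongr
    exact filter_subset _ _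
  by_contra! hlt
  set R := {i ∈ S | f i ∉ T + Y} with hR
  have hR0 : 0 < #R := Nat.pos_of_mul_pos_left (Nat.zero_lt_of_lt hlt)
  obtain ⟨t, htRY, hRY⟩ :=
    exists_card_mul_card_le_mul_card_filter_mem_add (card_pos.1 hR0) hY f
  have hRYD : R.image f - Y ⊆ D := sub_subset_sub_right (image_subset_image (filter_subset _ _))
  set E := {i ∈ R | f i ∈ {t} + Y} with hE
  have hgain : #R * #Y ≤ #D * #E := hRY.trans (by gcongr)
  have hE0 : 0 < #E := Nat.pos_of_mul_pos_left ((Nat.mul_pos hR0 hY.card_pos).trans_le hgain)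
  have htT : t ∉ T := by
    intro htT
    obtain ⟨i, hi⟩ := card_pos.1 hE0
    obtain ⟨hiR, hit⟩ := mem_filter.1 hi
    exact (mem_filter.1 hiR).2 (add_subset_add_right (singleton_subset_iff.2 htT) hit)
  have hcover : #{i ∈ S | f i ∈ insert t T + Y} = #{i ∈ S | f i ∈ T + Y} + #E := by
    classical
    rw [hE, hR, filter_filter, ← card_union_of_disjoint]
    · congr 1
      ext i
      simp only [insert_eq, union_add, mem_filter, mem_union]
      tauto
    · exact disjoint_filter.2 fun i _ hi hiE => hiE.1 hi
  have hlarger := hmax (insert t T) ⟨insert_subset (hRYD htRY) hTD, by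
    rw [card_insert_of_notMem htT, hcover]
    calc (#T + 1) * #Y * #S = #T * #Y * #S + #S * #Y := by ring
      _ ≤ N * #D * #{i ∈ S | f i ∈ T + Y} + N * #R * #Y := by gcongr
      _ = N * #D * #{i ∈ S | f i ∈ T + Y} + N * (#R * #Y) := by ring
      _ ≤ N * #D * #{i ∈ S | f i ∈ T + Y} + N * (#D * #E) := by gcongr
      _ = N * #D * (#{i ∈ S | f i ∈ T + Y} + #E) := by ring⟩
  rw [card_insert_of_notMem htT] at hlarger
  omega

lemma exists_card_mul_le_and_mul_card_filter_mul_notMem_add_le {F : Type*} [Field F]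
    [DecidableEq F] {A B Z : Finset F} {x : F} {m : ℕ} (hm0 : 0 < m) (hm : m ≤ #(x • A ∩ Z))
    (N : ℕ) :
    ∃ T : Finset F, #T * m ≤ N * #(B - A) ∧ N * #{y ∈ B | x * y ∉ T + Z} ≤ #B := by
  obtain ⟨T, hT, hTB⟩ := exists_card_mul_card_le_and_mul_card_filter_notMem_add_le B (x • ·)
    (card_pos.1 (hm0.trans_le hm)) N
  have hsub : x • B - x • A ∩ Z ⊆ x • (B - A) := by
    rw [smul_finset_sub]
    exact sub_subset_sub_left inter_subset_left
  refine ⟨T, ?_, le_trans ?_ hTB⟩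
  · calc #T * m ≤ #T * #(x • A ∩ Z) := by gcongr
      _ ≤ N * #(x • B - x • A ∩ Z) := hT
      _ ≤ N * #(B - A) :=
        Nat.mul_le_mul_left _ ((card_le_card hsub).trans card_smul_finset_le)
  · gcongr _ * #?_
    exact monotone_filter_right _ fun y _ hy h => hy (add_subset_add_left inter_subset_right h)

lemma mul_card_le_mul_card_filter_forall_add {ι κ : Type*} {S : Finset ι} {I : Finset κ}
    {P : κ → ι → Prop} [∀ k, DecidablePred (P k)] {N : ℕ}
    (h : ∀ k ∈ I, N * #{i ∈ S | ¬P k i} ≤ #S) :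
    N * #S ≤ N * #{i ∈ S | ∀ k ∈ I, P k i} + #I * #S := by
  classical
  have hcover : S ⊆ {i ∈ S | ∀ k ∈ I, P k i} ∪ I.biUnion fun k => {i ∈ S | ¬P k i} := by
    intro i hi
    simp only [mem_union, mem_biUnion, mem_filter, hi, true_and]
    by_contra! hbad
    exact hbad.1.elim fun k hk => hk.2 (hbad.2 k hk.1)
  calc N * #S ≤ N * (#{i ∈ S | ∀ k ∈ I, P k i} + ∑ k ∈ I, #{i ∈ S | ¬P k i}) := by
        gcongr
        exact (card_le_card hcover).trans <| (card_union_le _ _).trans <| by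
          gcongr
          exact card_biUnion_le
    _ = N * #{i ∈ S | ∀ k ∈ I, P k i} + ∑ k ∈ I, N * #{i ∈ S | ¬P k i} := by
        rw [mul_add, mul_sum]
    _ ≤ N * #{i ∈ S | ∀ k ∈ I, P k i} + #I * #S := by
        gcongr
        exact sum_le_card_nsmul _ _ _ h

lemma exists_subset_forall_smul_subset_add {F : Type*} [Field F] [DecidableEq F]
    {A B Z I : Finset F} {m : ℕ} (hm0 : 0 < m) (hm : ∀ x ∈ I, m ≤ #(x • A ∩ Z)) :
    ∃ U ⊆ B, #B ≤ 2 * #U ∧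
      ∀ x ∈ I, ∃ T : Finset F, #T * m ≤ 2 * #I * #(B - A) ∧ x • U ⊆ T + Z := by
  rcases I.eq_empty_or_nonempty with rfl | hI
  · exact ⟨B, Subset.rfl, Nat.le_mul_of_pos_left _ two_pos, by simp⟩
  choose! T hT hTB using fun x hx =>
    exists_card_mul_le_and_mul_card_filter_mul_notMem_add_le (B := B) hm0 (hm x hx) (2 * #I)
  refine ⟨{y ∈ B | ∀ x ∈ I, x * y ∈ T x + Z}, filter_subset _ _, ?_,
    fun x hx => ⟨T x, hT x hx, ?_⟩⟩
  · refine Nat.le_of_mul_le_mul_left (c := #I) ?_ hI.card_pos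
    linarith [mul_card_le_mul_card_filter_forall_add hTB]
  · rintro _ hxy
    obtain ⟨y, hy, rfl⟩ := mem_smul_finset.1 hxy
    exact (mem_filter.1 hy).2 x hx

end Covering

section Dilates

variable {F : Type*} [Field F]

/-- The set of all quotients `(a - b) / (c - d)` of differences of elements of `B`, which is the
set of `r` for which `(x, y) ↦ x + r * y` fails to be injective on `B × B`. The condition `c ≠ d`
excludes quotients by zero. -/
def differenceQuotients (B : Finset F) : Set F :=
  {r | ∃ a ∈ B, ∃ b ∈ B, ∃ c ∈ B, ∃ d ∈ B, c ≠ d ∧ r = (a - b) / (c - d)}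

lemma differenceQuotients_mono {B C : Finset F} (h : B ⊆ C) :
    differenceQuotients B ⊆ differenceQuotients C := by
  rintro r ⟨a, ha, b, hb, c, hc, d, hd, hr⟩
  exact ⟨a, h ha, b, h hb, c, h hc, d, h hd, hr⟩

lemma zero_mem_differenceQuotients {B : Finset F} (hB : B.Nontrivial) :
    0 ∈ differenceQuotients B := by
  obtain ⟨c, hc, d, hd, hcd⟩ := hB
  exact ⟨c, hc, c, hc, c, hc, d, hd, hcd, by simp⟩

variable [DecidableEq F]

lemma card_mul_card_le_card_add_smul {B X Y : Finset F} {r : F} (hr : r ∉ differenceQuotients B)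
    (hX : X ⊆ B) (hY : Y ⊆ B) : #X * #Y ≤ #(X + r • Y) := by
  rw [← card_product]
  refine card_le_card_of_injOn (fun q => q.1 + r * q.2) ?_ ?_
  · rintro ⟨x, y⟩ hq
    obtain ⟨hx, hy⟩ := mem_product.1 hq
    exact add_mem_add hx (smul_mem_smul_finset hy)
  · rintro ⟨x, y⟩ hq ⟨x', y'⟩ hq' heq
    obtain ⟨hx, hy⟩ := mem_product.1 hq
    obtain ⟨hx', hy'⟩ := mem_product.1 hq'
    dsimp only at hx hy hx' hy' heq
    have hyy : y = y' := by
      by_contra hne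
      refine hr ⟨x', hX hx', x, hX hx, y, hY hy, y', hY hy', hne, ?_⟩
      rw [eq_div_iff (sub_ne_zero.2 hne)]
      linear_combination heq
    subst hyy
    simpa using heq

lemma card_cube_le_of_sub_one_notMem_differenceQuotients {U : Finset F} {r : F}
    (hr : r - 1 ∉ differenceQuotients U) :
    #U ^ 3 ≤ 4 * #(U - U) * #(U + r • U) := by
  rcases U.eq_empty_or_nonempty with rfl | hU
  · simp
  obtain ⟨X, hXU, hX, hplu⟩ := exists_subset_card_add_add_mul_sq_le hU (r • U) (-U)
  have hsub : X + (r - 1) • U ⊆ r • U + X + -U := by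
    refine add_subset_iff.2 fun x hx z hz => ?_
    obtain ⟨u, hu, rfl⟩ := mem_smul_finset.1 hz
    rw [show x + (r - 1) • u = r • u + x + -u by simp only [smul_eq_mul]; ring]
    exact add_mem_add (add_mem_add (smul_mem_smul_finset hu) hx) (neg_mem_neg hu)
  refine Nat.le_of_mul_le_mul_left (c := #X) ?_ hX.card_pos
  calc #X * #U ^ 3 = #X * #U * #U ^ 2 := by ring
    _ ≤ #(X + (r - 1) • U) * #U ^ 2 := by
        gcongr
        exact card_mul_card_le_card_add_smul hr hXU Subset.rfl
    _ ≤ #(r • U + X + -U) * #U ^ 2 := by gcongr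
    _ ≤ 4 * #X * (#(U + r • U) * #(U + -U)) := hplu
    _ = #X * (4 * #(U - U) * #(U + r • U)) := by rw [← sub_eq_add_neg]; ring

lemma addEnergy_smul_right_le (r : F) (s t : Finset F) :
    s.addEnergy (r • t) ≤
      #{q ∈ (s ×ˢ s) ×ˢ t ×ˢ t | q.1.1 + r * q.2.1 = q.1.2 + r * q.2.2} := by
  refine card_le_card_of_surjOn (Prod.map id (Prod.map (r * ·) (r * ·))) ?_
  rintro ⟨⟨a, b⟩, c, d⟩ hq
  simp only [coe_filter, mem_product, mem_smul_finset, Set.mem_ofPred_eq] at hq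
  obtain ⟨⟨⟨ha, hb⟩, ⟨c, hc, rfl⟩, d, hd, rfl⟩, h⟩ := hq
  exact ⟨((a, b), c, d), by simpa [ha, hb, hc, hd] using h, rfl⟩

variable [Fintype F]

lemma card_filter_units_add_mul_eq_le (a b c d : F) :
    #{r : Fˣ | a + r * c = b + r * d} ≤
      (if a ≠ b ∧ c ≠ d then 1 else 0) + if a = b ∧ c = d then Fintype.card Fˣ else 0 := by
  by_cases hcd : c = d
  · subst hcd
    by_cases hab : a = b
    · simp [hab]
    · simp [hab]
  have hunique (r : Fˣ) (hr : a + r * c = b + r * d) (s : Fˣ) (hs : a + s * c = b + s * d) :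
      r = s := by
    have hmul : ((r : F) - s) * (c - d) = 0 := by linear_combination hr - hs
    exact Units.ext (sub_eq_zero.1 ((mul_eq_zero.1 hmul).resolve_right (sub_ne_zero.2 hcd)))
  by_cases hab : a = b
  · simp [hab, hcd]
  · simpa [hab, hcd, card_le_one] using hunique

lemma sum_addEnergy_units_smul_le (s t : Finset F) :
    ∑ r : Fˣ, s.addEnergy ((r : F) • t) ≤
      #s.offDiag * #t.offDiag + #s * #t * Fintype.card Fˣ := by
  have hoff : {q ∈ (s ×ˢ s) ×ˢ t ×ˢ t | q.1.1 ≠ q.1.2 ∧ q.2.1 ≠ q.2.2} =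
      s.offDiag ×ˢ t.offDiag := by
    ext
    simp only [mem_filter, mem_product, mem_offDiag]
    tauto
  have hdiag : {q ∈ (s ×ˢ s) ×ˢ t ×ˢ t | q.1.1 = q.1.2 ∧ q.2.1 = q.2.2} = s.diag ×ˢ t.diag := by
    rw [diag_eq_filter, diag_eq_filter, ← filter_product]
  calc ∑ r : Fˣ, s.addEnergy ((r : F) • t)
      ≤ ∑ r : Fˣ, #{q ∈ (s ×ˢ s) ×ˢ t ×ˢ t | q.1.1 + (r : F) * q.2.1 = q.1.2 + r * q.2.2} :=
        sum_le_sum fun r _ => addEnergy_smul_right_le _ s t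
    _ = ∑ q ∈ (s ×ˢ s) ×ˢ t ×ˢ t, #{r : Fˣ | q.1.1 + (r : F) * q.2.1 = q.1.2 + r * q.2.2} :=
        sum_card_bipartiteAbove_eq_sum_card_bipartiteBelow _
    _ ≤ ∑ q ∈ (s ×ˢ s) ×ˢ t ×ˢ t, ((if q.1.1 ≠ q.1.2 ∧ q.2.1 ≠ q.2.2 then 1 else 0) +
          if q.1.1 = q.1.2 ∧ q.2.1 = q.2.2 then Fintype.card Fˣ else 0) :=
        sum_le_sum fun q _ => card_filter_units_add_mul_eq_le _ _ _ _
    _ = #s.offDiag * #t.offDiag + #s * #t * Fintype.card Fˣ := by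
        rw [sum_add_distrib, ← sum_filter, ← sum_filter, hoff, hdiag]
        simp

lemma exists_unit_addEnergy_smul_le {B : Finset F} (hB : #B ^ 2 ≤ Fintype.card F) :
    ∃ r : Fˣ, B.addEnergy ((r : F) • B) ≤ 2 * #B ^ 2 := by
  have hoff : #B.offDiag ≤ Fintype.card Fˣ := by
    rw [Fintype.card_units, offDiag_card]
    rcases B.eq_empty_or_nonempty with rfl | hBne
    · simp
    have := hBne.card_pos
    rw [sq] at hB
    omega
  obtain ⟨r, -, hr⟩ : ∃ r ∈ (univ : Finset Fˣ), B.addEnergy ((r : F) • B) ≤ 2 * #B ^ 2 := by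
    refine exists_le_of_sum_le univ_nonempty ((sum_addEnergy_units_smul_le B B).trans ?_)
    calc #B.offDiag * #B.offDiag + #B * #B * Fintype.card Fˣ
        ≤ #B * #B * Fintype.card Fˣ + #B * #B * Fintype.card Fˣ := by
          gcongr
          exact offDiag_card B ▸ Nat.sub_le _ _
      _ = ∑ _r : Fˣ, 2 * #B ^ 2 := by
          rw [sum_const, card_univ, smul_eq_mul]
          ring
  exact ⟨r, hr⟩

lemma exists_unit_forall_card_pow_four_le {B : Finset F} (hB : #B ^ 2 ≤ Fintype.card F) :
    ∃ r : Fˣ, ∀ U ⊆ B, #U ^ 4 ≤ 2 * #B ^ 2 * #(U + (r : F) • U) := by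
  obtain ⟨r, hr⟩ := exists_unit_addEnergy_smul_le hB
  refine ⟨r, fun U hU => ?_⟩
  calc #U ^ 4 = #U ^ 2 * #((r : F) • U) ^ 2 := by rw [card_smul_finset₀ r.ne_zero]; ring
    _ ≤ #(U + (r : F) • U) * U.addEnergy ((r : F) • U) := le_card_add_mul_addEnergy _ _
    _ ≤ #(U + (r : F) • U) * B.addEnergy ((r : F) • B) := by
        gcongr
    _ ≤ #(U + (r : F) • U) * (2 * #B ^ 2) := by gcongr
    _ = 2 * #B ^ 2 * #(U + (r : F) • U) := by ring

end Dilates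

lemma forall_zmod_of_add_one {n : ℕ} [NeZero n] {P : ZMod n → Prop} (h0 : P 0)
    (hadd : ∀ r, P r → P (r + 1)) (r : ZMod n) : P r := by
  have hnat (k : ℕ) : P k := by
    induction k with
    | zero => simpa using h0
    | succ k ih => simpa using hadd _ ih
  simpa using hnat r.val

lemma exists_mem_differenceQuotients_sub_one_notMem {p : ℕ} [Fact p.Prime] {B : Finset (ZMod p)}
    (hB : B.Nontrivial) (hne : differenceQuotients B ≠ Set.univ) :
    ∃ r ∈ differenceQuotients B, r - 1 ∉ differenceQuotients B := by
  by_contra! hsub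
  refine hne (Set.eq_univ_of_forall fun r => ?_)
  suffices ∀ s, -s ∈ differenceQuotients B by simpa using this (-r)
  refine forall_zmod_of_add_one ?_ fun s hs => ?_
  · simpa using zero_mem_differenceQuotients hB
  · rw [neg_add']
    exact hsub _ hs

lemma exists_mem_differenceQuotients_card_cube_le {p : ℕ} [Fact p.Prime] {B : Finset (ZMod p)}
    (hB : B.Nontrivial) (hBp : #B ^ 2 ≤ p) :
    ∃ r ∈ differenceQuotients B, ∀ U ⊆ B, #B ≤ 2 * #U →
      #B ^ 3 ≤ 32 * #(B - B) * #(U + r • U) := by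
  by_cases huniv : differenceQuotients B = Set.univ
  · obtain ⟨r, hr⟩ := exists_unit_forall_card_pow_four_le (hBp.trans_eq (ZMod.card p).symm)
    refine ⟨r, huniv ▸ Set.mem_univ _, fun U hUB hU => ?_⟩
    have hB0 : 0 < #B := hB.nonempty.card_pos
    refine Nat.le_of_mul_le_mul_left (c := #B) ?_ hB0
    calc #B * #B ^ 3 = #B ^ 4 := by ring
      _ ≤ (2 * #U) ^ 4 := by gcongr
      _ = 16 * #U ^ 4 := by ring
      _ ≤ 16 * (2 * #B ^ 2 * #(U + (r : ZMod p) • U)) := by gcongr; exact hr U hUB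
      _ = #B * (32 * #B * #(U + (r : ZMod p) • U)) := by ring
      _ ≤ #B * (32 * #(B - B) * #(U + (r : ZMod p) • U)) := by
          gcongr _ * (_ * ?_ * _)
          exact card_le_card_sub_right hB.nonempty
  · obtain ⟨r, hr, hr1⟩ := exists_mem_differenceQuotients_sub_one_notMem hB huniv
    refine ⟨r, hr, fun U hUB hU => ?_⟩
    calc #B ^ 3 ≤ (2 * #U) ^ 3 := by gcongr
      _ = 8 * #U ^ 3 := by ring
      _ ≤ 8 * (4 * #(U - U) * #(U + r • U)) := by
          gcongr
          exact card_cube_le_of_sub_one_notMem_differenceQuotients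
            fun h => hr1 (differenceQuotients_mono hUB h)
      _ ≤ 8 * (4 * #(B - B) * #(U + r • U)) := by gcongr
      _ = 32 * #(B - B) * #(U + r • U) := by ring

section LevelSets

lemma sub_one_rpow_add_le_rpow {x β : ℝ} (hx : 1 ≤ x) (hβ0 : 0 ≤ β) (hβ1 : β ≤ 1) :
    (x - 1) ^ β + β * x ^ (β - 1) ≤ x ^ β := by
  have hx0 : 0 < x := by linarith
  have hinv : x⁻¹ ≤ 1 := inv_le_one_of_one_le₀ hx
  calc (x - 1) ^ β + β * x ^ (β - 1)
      = x ^ β * (1 + -x⁻¹) ^ β + β * x ^ (β - 1) := by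
        rw [← Real.mul_rpow hx0.le (by linarith), mul_add, mul_neg, mul_inv_cancel₀ hx0.ne',
          mul_one, sub_eq_add_neg]
    _ ≤ x ^ β * (1 + β * -x⁻¹) + β * x ^ (β - 1) := by
        gcongr
        exact rpow_one_add_le_one_add_mul_self (by linarith) hβ0 hβ1
    _ = x ^ β := by
        rw [Real.rpow_sub_one hx0.ne']
        ring

/- Listing the values in decreasing order, the `j`-th one is at most `k * j ^ (-α)`, and
`∑ j ≤ n, j ^ (-α) ≤ n ^ (1 - α) / (1 - α)`; the induction adds the values in this order. -/
lemma sum_le_of_forall_mul_card_rpow_le {ι : Type*} {S : Finset ι} {f : ι → ℝ} {α k : ℝ}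
    (hα0 : 0 ≤ α) (hα1 : α < 1) (hf : ∀ a ∈ S, 0 ≤ f a)
    (h : ∀ a ∈ S, f a * (#{i ∈ S | f a ≤ f i} : ℝ) ^ α ≤ k) :
    ∑ a ∈ S, f a ≤ k / (1 - α) * (#S : ℝ) ^ (1 - α) := by
  classical
  have hβ : 0 < 1 - α := sub_pos.2 hα1
  induction S using induction_on_min_value f with
  | empty => simp [hβ.ne']
  | insert a S ha hmin ih =>
    have hsum : ∑ i ∈ S, f i ≤ k / (1 - α) * (#S : ℝ) ^ (1 - α) := by
      refine ih (fun b hb => hf b (mem_insert_of_mem hb)) fun b hb => ?_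
      refine le_trans ?_ (h b (mem_insert_of_mem hb))
      have := hf b (mem_insert_of_mem hb)
      gcongr
      exact subset_insert _ _
    have hfa0 : 0 ≤ f a := hf a (mem_insert_self _ _)
    have hlevel : f a * ((#S : ℝ) + 1) ^ α ≤ k := by
      have hall : {i ∈ insert a S | f a ≤ f i} = insert a S :=
        filter_eq_self.2 (forall_mem_insert _ _ _ |>.2 ⟨le_rfl, hmin⟩)
      have hlevel := h a (mem_insert_self _ _)
      rwa [hall, card_insert_of_notMem ha, Nat.cast_add_one] at hlevel
    have hk : 0 ≤ k := le_trans (by positivity) hlevel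
    have hfa : f a ≤ k * ((#S : ℝ) + 1) ^ (1 - α - 1) := by
      calc f a = f a * ((#S : ℝ) + 1) ^ α * ((#S : ℝ) + 1) ^ (1 - α - 1) := by
            rw [mul_assoc, ← Real.rpow_add (by positivity)]
            simp
        _ ≤ k * ((#S : ℝ) + 1) ^ (1 - α - 1) := by gcongr
    have hpow := sub_one_rpow_add_le_rpow (x := #S + 1) (by simp) hβ.le (by linarith)
    rw [add_sub_cancel_right] at hpow
    rw [sum_insert ha, card_insert_of_notMem ha, Nat.cast_add_one]
    calc f a + ∑ i ∈ S, f i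
        ≤ k * ((#S : ℝ) + 1) ^ (1 - α - 1) + k / (1 - α) * (#S : ℝ) ^ (1 - α) :=
          add_le_add hfa hsum
      _ = k / (1 - α) * ((#S : ℝ) ^ (1 - α) + (1 - α) * ((#S : ℝ) + 1) ^ (1 - α - 1)) := by
          field_simp
          ring
      _ ≤ k / (1 - α) * ((#S : ℝ) + 1) ^ (1 - α) := by gcongr

lemma sum_pow_le_of_forall_pow_mul_card_pow_le {ι : Type*} {S : Finset ι} {f : ι → ℕ} {d M : ℕ}
    (h : ∀ a ∈ S, f a ^ (d + 1) * #{i ∈ S | f a ≤ f i} ^ d ≤ M) :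
    (∑ a ∈ S, f a) ^ (d + 1) ≤ (d + 1) ^ (d + 1) * M * #S := by
  set δ : ℝ := ((d + 1 : ℕ) : ℝ)⁻¹ with hδ
  have hδ0 : 0 < δ := by positivity
  have hδ1 : δ ≤ 1 := Nat.cast_inv_le_one _
  have hroot (x : ℝ) (hx : 0 ≤ x) : (x ^ δ) ^ (d + 1) = x :=
    Real.rpow_inv_natCast_pow hx d.succ_ne_zero
  have hlevel : ∀ a ∈ S, (f a : ℝ) * (#{i ∈ S | (f a : ℝ) ≤ f i} : ℝ) ^ (1 - δ) ≤ (M : ℝ) ^ δ := by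
    intro a ha
    refine le_of_pow_le_pow_left₀ d.succ_ne_zero (by positivity) ?_
    have hexp : (1 - δ) * ((d + 1 : ℕ) : ℝ) = d := by
      rw [hδ]
      field_simp
      push_cast
      ring
    rw [mul_pow, ← Real.rpow_mul_natCast (by positivity), hexp, Real.rpow_natCast,
      hroot _ (by positivity)]
    simp only [Nat.cast_le]
    exact_mod_cast h a ha
  have hsum := sum_le_of_forall_mul_card_rpow_le (f := fun a => (f a : ℝ)) (sub_nonneg.2 hδ1)
    (sub_lt_self 1 hδ0) (fun a _ => by positivity) hlevel
  rw [sub_sub_cancel] at hsum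
  have hpow := pow_le_pow_left₀ (by positivity) hsum (d + 1)
  rw [mul_pow, div_pow, hroot _ (by positivity), hroot _ (by positivity), hδ, inv_pow,
    div_inv_eq_mul, mul_comm (M : ℝ)] at hpow
  exact_mod_cast hpow

end LevelSets

section Energy

lemma card_add_div_smul_le {F : Type*} [Field F] [DecidableEq F] {a b c d : F} (hcd : c ≠ d)
    {U Z Ta Tb Tc Td : Finset F} (ha : a • U ⊆ Ta + Z) (hb : b • U ⊆ Tb + Z)
    (hc : c • U ⊆ Tc + Z) (hd : d • U ⊆ Td + Z) :
    #(U + ((a - b) / (c - d)) • U) ≤ #Ta * #Tb * (#Tc * #Td) * #(Z + Z - Z - Z) := by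
  have hcd0 : c - d ≠ 0 := sub_ne_zero.2 hcd
  have hsub : (c - d) • (U + ((a - b) / (c - d)) • U) ⊆
      (Ta - Tb) + (Tc - Td) + (Z + Z - Z - Z) := by
    calc (c - d) • (U + ((a - b) / (c - d)) • U) = (c - d) • U + (a - b) • U := by
          rw [smul_add, smul_smul, mul_div_cancel₀ _ hcd0]
      _ ⊆ (c • U - d • U) + (a • U - b • U) :=
          add_subset_add (sub_smul_finset_subset c d U) (sub_smul_finset_subset a b U)
      _ ⊆ ((Tc + Z) - (Td + Z)) + ((Ta + Z) - (Tb + Z)) := by gcongr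
      _ = (Ta - Tb) + (Tc - Td) + (Z + Z - Z - Z) := by
          simp only [sub_eq_add_neg, neg_add]
          ac_rfl
  calc #(U + ((a - b) / (c - d)) • U) = #((c - d) • (U + ((a - b) / (c - d)) • U)) :=
        (card_smul_finset₀ hcd0 _).symm
    _ ≤ #((Ta - Tb) + (Tc - Td) + (Z + Z - Z - Z)) := card_le_card hsub
    _ ≤ #(Ta - Tb) * #(Tc - Td) * #(Z + Z - Z - Z) :=
        card_add_le.trans (Nat.mul_le_mul_right _ card_add_le)
    _ ≤ #Ta * #Tb * (#Tc * #Td) * #(Z + Z - Z - Z) := by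
        gcongr <;> exact card_sub_le

variable {p : ℕ} [Fact p.Prime]

lemma pow_four_mul_card_cube_le_of_nontrivial {A B Z : Finset (ZMod p)} {m : ℕ} (hm0 : 0 < m)
    (hB : B.Nontrivial) (hBp : #B ^ 2 ≤ p) (hm : ∀ x ∈ B, m ≤ #(x • A ∩ Z)) :
    m ^ 4 * #B ^ 3 ≤ 2 ^ 17 * (#(B - A) ^ 4 * #(B - B) * #(Z + Z - Z - Z)) := by
  obtain ⟨r, ⟨a, ha, b, hb, c, hc, d, hd, hcd, rfl⟩, hr⟩ :=
    exists_mem_differenceQuotients_card_cube_le hB hBp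
  have hsub : ({a, b, c, d} : Finset (ZMod p)) ⊆ B := by simp [insert_subset_iff, *]
  obtain ⟨U, hUB, hU, hcover⟩ :=
    exists_subset_forall_smul_subset_add (B := B) hm0 fun x hx => hm x (hsub hx)
  have hcover8 (x : ZMod p) (hx : x ∈ ({a, b, c, d} : Finset (ZMod p))) :
      ∃ T : Finset (ZMod p), #T * m ≤ 8 * #(B - A) ∧ x • U ⊆ T + Z := by
    obtain ⟨T, hT, hTU⟩ := hcover x hx
    refine ⟨T, hT.trans ?_, hTU⟩
    gcongr
    exact Nat.mul_le_mul_left 2 card_le_four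
  obtain ⟨Ta, hTa, hTaU⟩ := hcover8 a (by simp)
  obtain ⟨Tb, hTb, hTbU⟩ := hcover8 b (by simp)
  obtain ⟨Tc, hTc, hTcU⟩ := hcover8 c (by simp)
  obtain ⟨Td, hTd, hTdU⟩ := hcover8 d (by simp)
  calc m ^ 4 * #B ^ 3
      ≤ m ^ 4 * (32 * #(B - B) * #(U + ((a - b) / (c - d)) • U)) := by
        gcongr
        exact hr U hUB hU
    _ ≤ m ^ 4 * (32 * #(B - B) * (#Ta * #Tb * (#Tc * #Td) * #(Z + Z - Z - Z))) := by
        gcongr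
        exact card_add_div_smul_le hcd hTaU hTbU hTcU hTdU
    _ = 32 * ((#Ta * m) * (#Tb * m) * ((#Tc * m) * (#Td * m))) * #(B - B) *
        #(Z + Z - Z - Z) := by ring
    _ ≤ 32 * ((8 * #(B - A)) * (8 * #(B - A)) * ((8 * #(B - A)) * (8 * #(B - A)))) *
        #(B - B) * #(Z + Z - Z - Z) := by gcongr
    _ = 2 ^ 17 * (#(B - A) ^ 4 * #(B - B) * #(Z + Z - Z - Z)) := by ring

lemma pow_four_mul_card_cube_le {A B Z : Finset (ZMod p)} {m : ℕ} (hBp : #B ^ 2 ≤ p)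
    (hm : ∀ x ∈ B, m ≤ #(x • A ∩ Z)) :
    m ^ 4 * #B ^ 3 ≤ 2 ^ 17 * (#(B - A) ^ 4 * #(B - B) * #(Z + Z - Z - Z)) := by
  rcases m.eq_zero_or_pos with rfl | hm0
  · simp
  rcases B.eq_empty_or_nonempty with rfl | hB
  · simp
  rcases hB.exists_eq_singleton_or_nontrivial with ⟨x, rfl⟩ | hB'
  · have hmx := hm x (mem_singleton_self x)
    have hZ : Z.Nonempty := (card_pos.1 (hm0.trans_le hmx)).mono inter_subset_right
    have hmA : m ≤ #({x} - A) := calc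
      m ≤ #(x • A) := hmx.trans (card_le_card inter_subset_left)
      _ ≤ #A := card_smul_finset_le
      _ ≤ #({x} - A) := card_le_card_sub_left hB
    calc m ^ 4 * #{x} ^ 3 = 1 * (m ^ 4 * 1 * 1) := by simp
      _ ≤ 2 ^ 17 * (#({x} - A) ^ 4 * #({x} - {x} : Finset (ZMod p)) * #(Z + Z - Z - Z)) := by
        gcongr
        · norm_num
        · exact (hB.sub hB).card_pos
        · exact (((hZ.add hZ).sub hZ).sub hZ).card_pos
  · exact pow_four_mul_card_cube_le_of_nontrivial hm0 hB' hBp hm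

lemma sum_card_smul_inter_pow_four_le {Y : Finset (ZMod p)} (hY : #Y ^ 2 ≤ p)
    (A Z : Finset (ZMod p)) :
    (∑ x ∈ Y, #(x • A ∩ Z)) ^ 4 ≤
      2 ^ 25 * (#Y * #(Y - A) ^ 4 * #(Y - Y) * #(Z + Z - Z - Z)) := by
  have hlevel : ∀ a ∈ Y, #(a • A ∩ Z) ^ 4 * #{x ∈ Y | #(a • A ∩ Z) ≤ #(x • A ∩ Z)} ^ 3 ≤
      2 ^ 17 * (#(Y - A) ^ 4 * #(Y - Y) * #(Z + Z - Z - Z)) := by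
    intro a _
    have hsub : {x ∈ Y | #(a • A ∩ Z) ≤ #(x • A ∩ Z)} ⊆ Y := filter_subset _ _
    refine (pow_four_mul_card_cube_le ?_ fun x hx => (mem_filter.1 hx).2).trans ?_
    · exact le_trans (by gcongr) hY
    · gcongr
  refine (sum_pow_le_of_forall_pow_mul_card_pow_le hlevel).trans_eq ?_
  ring

theorem energy_bound_no_log_general {Y : Finset (ZMod p)} (hY : #Y ^ 2 ≤ p)
    (Z : Finset (ZMod p)) :
    paperMulEnergy Y Z ^ 4 ≤
      2 ^ 25 * (#Y ^ 5 * #(Y - Z) ^ 4 * #(Y - Y) * #(Z + Z - Z - Z)) := by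
  have hrow (y : ZMod p) : (∑ x ∈ Y, #(x • Z ∩ y • Z)) ^ 4 ≤
      2 ^ 25 * (#Y * #(Y - Z) ^ 4 * #(Y - Y) * #(Z + Z - Z - Z)) := by
    refine (sum_card_smul_inter_pow_four_le hY Z (y • Z)).trans ?_
    gcongr 2 ^ 25 * (_ * ?_)
    rw [← smul_add, ← smul_finset_sub, ← smul_finset_sub]
    exact card_smul_finset_le
  calc paperMulEnergy Y Z ^ 4 = (∑ y ∈ Y, ∑ x ∈ Y, #(x • Z ∩ y • Z)) ^ 4 := by
        rw [sum_comm]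
        rfl
    _ ≤ #Y ^ 3 * ∑ y ∈ Y, (∑ x ∈ Y, #(x • Z ∩ y • Z)) ^ 4 :=
        pow_sum_le_card_mul_sum_pow (fun _ _ => Nat.zero_le _) 3
    _ ≤ #Y ^ 3 * (#Y * (2 ^ 25 * (#Y * #(Y - Z) ^ 4 * #(Y - Y) * #(Z + Z - Z - Z)))) := by
        gcongr
        exact sum_le_card_nsmul _ _ _ fun y _ => hrow y
    _ = 2 ^ 25 * (#Y ^ 5 * #(Y - Z) ^ 4 * #(Y - Y) * #(Z + Z - Z - Z)) := by ring

end Energy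

theorem energy_bound_no_log :
    ∃ C : ℝ, 0 < C ∧ ∀ (p : ℕ), p.Prime → ∀ A : Finset (ZMod p),
      2 ≤ A.card → (A.card : ℝ) ≤ Real.sqrt p →
      (paperMulEnergy A A : ℝ) ^ 4 ≤
        C * (A.card : ℝ) ^ 5 * ((A - A).card : ℝ) ^ 5 * ((A + A - A - A).card : ℝ) := by
  refine ⟨2 ^ 25, by norm_num, fun p hp A _ hA => ?_⟩
  have : Fact p.Prime := ⟨hp⟩
  have hAp : #A ^ 2 ≤ p := by exact_mod_cast (Real.le_sqrt (by positivity) (by positivity)).1 hA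
  calc (paperMulEnergy A A : ℝ) ^ 4
      ≤ 2 ^ 25 * (#A ^ 5 * #(A - A) ^ 4 * #(A - A) * #(A + A - A - A)) := by
        exact_mod_cast energy_bound_no_log_general hAp A
    _ = 2 ^ 25 * (#A : ℝ) ^ 5 * (#(A - A) : ℝ) ^ 5 * (#(A + A - A - A) : ℝ) := by ring
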